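/- arXiv:2308.08439 — 2 statements merged into one kernel-verified Lean document; each statement's English description precedes it below -/
import Mathlib

section
/- The values of the characteristic functions at the integers uniquely recover K: with convergence in L²(0, π), K(x) = Σ_{n ∈ ℤ} ((−1)ⁿ/π)·(Θ₁(n) + i·Θ₂(n))·e^{2inx}, where Θ₁(λ) = (Δ₁(λ) + Δ₁(−λ))/2 and Θ₂(λ) = (Δ₂(λ) − Δ₂(−λ))/2. -/
open MeasureTheory Real Set Filter

noncomputable def Delta1 (a₁ : ℝ) (K G : ℝ → ℂ) (lam : ℂ) : ℂ :=
  Complex.sin (π * lam)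
    + (∫ x in (a₁ / 2)..(π - a₁ / 2), K x * Complex.cos (lam * ((π - 2 * x : ℝ) : ℂ)))
    - ∫ x in (a₁ / 2)..(π - a₁ / 2), G x * Complex.sin (lam * ((π - 2 * x : ℝ) : ℂ))

noncomputable def Delta2 (a₁ : ℝ) (K G : ℝ → ℂ) (lam : ℂ) : ℂ :=
  -Complex.cos (π * lam)
    + (∫ x in (a₁ / 2)..(π - a₁ / 2), K x * Complex.sin (lam * ((π - 2 * x : ℝ) : ℂ)))
    + ∫ x in (a₁ / 2)..(π - a₁ / 2), G x * Complex.cos (lam * ((π - 2 * x : ℝ) : ℂ))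

noncomputable def Theta1 (a₁ : ℝ) (K G : ℝ → ℂ) (lam : ℂ) : ℂ :=
  (Delta1 a₁ K G lam + Delta1 a₁ K G (-lam)) / 2

noncomputable def Theta2 (a₁ : ℝ) (K G : ℝ → ℂ) (lam : ℂ) : ℂ :=
  (Delta2 a₁ K G lam - Delta2 a₁ K G (-lam)) / 2

/-!
Each `Δⱼ` has two integrals of opposite parity, so passing to the even part `Θ₁` and the odd part
`Θ₂` removes `G` and the trigonometric main terms, and Euler's formula gives
`Θ₁(λ) + i Θ₂(λ) = ∫ K(x) e^{iλ(π - 2x)} dx`. At `λ = n` this is `(-1)ⁿ π` times the `n`-th Fourier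
coefficient of `K` on `(0, π)`, whose Fourier series converges to `K` in `L²`.
-/

open scoped Topology

section Integrability

variable {E : Type*} [NormedAddCommGroup E]

theorem integrable_of_memLp_restrict_of_ae_eq_zero {α : Type*} [MeasurableSpace α] {μ : Measure α}
    {f : α → E} {p : ENNReal} {s t : Set α} (hp : 1 ≤ p) (ht : μ t ≠ ⊤) (hst : s ⊆ t)
    (hf : MemLp f p (μ.restrict t)) (hf0 : ∀ᵐ x ∂μ, x ∉ s → f x = 0) : Integrable f μ := by
  have : IsFiniteMeasure (μ.restrict t) := isFiniteMeasure_restrict.2 ht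
  have hft : IntegrableOn f t μ := hf.integrable hp
  exact hft.integrable_of_ae_notMem_eq_zero (hf0.mono fun x hx hxt => hx (mt (@hst x) hxt))

theorem intervalIntegral_eq_integral_of_ae_eq_zero [NormedSpace ℝ E] {μ : Measure ℝ} {f : ℝ → E}
    {a b : ℝ} (hf0 : ∀ᵐ x ∂μ, x ∉ Ioc a b → f x = 0) :
    ∫ x in a..b, f x ∂μ = ∫ x, f x ∂μ := by
  rcases le_total a b with hab | hba
  · rw [intervalIntegral.integral_of_le hab, setIntegral_eq_integral_of_ae_compl_eq_zero hf0]
  · have hf : f =ᵐ[μ] 0 := hf0.mono fun x hx => hx (by simp [Ioc_eq_empty hba.not_gt])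
    rw [integral_eq_zero_of_ae hf, intervalIntegral.integral_zero_ae (hf.mono fun x hx _ => hx)]

end Integrability

section FourierSeries

theorem eLpNorm_volume_addCircle {T : ℝ} [Fact (0 < T)] {E : Type*} [NormedAddCommGroup E]
    {p : ENNReal} (hp : p ≠ ⊤) (f : AddCircle T → E) :
    eLpNorm f p volume =
      ENNReal.ofReal T ^ (1 / p).toReal * eLpNorm f p AddCircle.haarAddCircle := by
  rw [AddCircle.volume_eq_smul_haarAddCircle, eLpNorm_smul_measure_of_ne_top hp, smul_eq_mul]

theorem tendsto_eLpNorm_sub_sum_fourier {T : ℝ} [Fact (0 < T)] {f : AddCircle T → ℂ}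
    (hf : MemLp f 2 AddCircle.haarAddCircle) :
    Tendsto (fun s : Finset ℤ => eLpNorm (fun t => f t - ∑ n ∈ s, fourierCoeff f n * fourier n t)
      2 AddCircle.haarAddCircle) atTop (𝓝 0) := by
  have hsum := (Lp.tendsto_Lp_iff_tendsto_eLpNorm _ f hf).1 (hasSum_fourier_series_L2 hf.toLp)
  refine hsum.congr fun s => ?_
  let P : C(AddCircle T, ℂ) := ∑ n ∈ s, fourierCoeff f n • fourier n
  have hP : ∑ n ∈ s, fourierCoeff (hf.toLp : AddCircle T → ℂ) n • fourierLp 2 n =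
      ContinuousMap.toLp 2 AddCircle.haarAddCircle ℂ P := by
    simp only [P, map_sum, map_smul, fourierLp, fourierCoeff_congr_ae hf.coeFn_toLp]
  rw [hP, eLpNorm_sub_comm]
  refine eLpNorm_congr_ae ?_
  filter_upwards [ContinuousMap.coeFn_toLp (𝕜 := ℂ) (p := 2) AddCircle.haarAddCircle P] with t ht
  rw [Pi.sub_apply, ht]
  simp [P]

theorem tendsto_eLpNorm_sub_sum_fourierCoeff_liftIoc {T : ℝ} [Fact (0 < T)] {a : ℝ} {f : ℝ → ℂ}
    (hf : MemLp f 2 (volume.restrict (Ioc a (a + T)))) :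
    Tendsto (fun s : Finset ℤ => eLpNorm
      (fun x => f x -
        ∑ n ∈ s, fourierCoeff (AddCircle.liftIoc T a f) n * fourier n (x : AddCircle T))
      2 (volume.restrict (Ioc a (a + T)))) atTop (𝓝 0) := by
  have hlift := hf.memLp_liftIoc
  have hhaar := tendsto_eLpNorm_sub_sum_fourier hlift.haarAddCircle
  have hvol := ENNReal.Tendsto.const_mul (a := ENNReal.ofReal T ^ (1 / (2 : ENNReal)).toReal) hhaar
    (Or.inr (by finiteness))
  simp only [← eLpNorm_volume_addCircle ENNReal.ofNat_ne_top, mul_zero] at hvol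
  refine hvol.congr fun s => ?_
  have hmeas : AEStronglyMeasurable (fun t => AddCircle.liftIoc T a f t -
      ∑ n ∈ s, fourierCoeff (AddCircle.liftIoc T a f) n * fourier n t) volume :=
    hlift.aestronglyMeasurable.sub (by fun_prop)
  rw [← eLpNorm_comp_measurePreserving hmeas (AddCircle.measurePreserving_mk T a)]
  refine eLpNorm_congr_ae ((ae_restrict_mem measurableSet_Ioc).mono fun x hx => ?_)
  simp only [Function.comp_apply, AddCircle.liftIoc_coe_apply hx]

theorem tendsto_eLpNorm_sub_sum_fourierCoeffOn {a b : ℝ} (hab : a < b) {f : ℝ → ℂ}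
    (hf : MemLp f 2 (volume.restrict (Ioc a b))) :
    Tendsto (fun s : Finset ℤ => eLpNorm
      (fun x => f x - ∑ n ∈ s, fourierCoeffOn hab f n * fourier n (x : AddCircle (b - a)))
      2 (volume.restrict (Ioc a b))) atTop (𝓝 0) := by
  have := Fact.mk (sub_pos.2 hab)
  rw [← add_sub_cancel a b] at hf
  simpa only [fourierCoeffOn, add_sub_cancel] using tendsto_eLpNorm_sub_sum_fourierCoeff_liftIoc hf

-- The period is `π - 0`, not `π`, because `fourierCoeffOn` on `(a, b]` uses `AddCircle (b - a)`.
theorem fourier_coe_pi_sub_zero (n : ℤ) (x : ℝ) :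
    fourier n (x : AddCircle (π - 0)) = Complex.exp (2 * Complex.I * n * x) := by
  have hpi : (π : ℂ) ≠ 0 := Complex.ofReal_ne_zero.2 pi_ne_zero
  rw [fourier_coe_apply, sub_zero]
  congr 1
  field_simp

end FourierSeries

section Spectra

variable (a₁ : ℝ) (K G : ℝ → ℂ)

theorem Theta1_eq_integral (lam : ℂ) :
    Theta1 a₁ K G lam =
      ∫ x in (a₁ / 2)..(π - a₁ / 2), K x * Complex.cos (lam * ((π - 2 * x : ℝ) : ℂ)) := by
  simp only [Theta1, Delta1, neg_mul, mul_neg, Complex.cos_neg, Complex.sin_neg,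
    intervalIntegral.integral_neg]
  ring

theorem Theta2_eq_integral (lam : ℂ) :
    Theta2 a₁ K G lam =
      ∫ x in (a₁ / 2)..(π - a₁ / 2), K x * Complex.sin (lam * ((π - 2 * x : ℝ) : ℂ)) := by
  simp only [Theta2, Delta2, neg_mul, mul_neg, Complex.cos_neg, Complex.sin_neg,
    intervalIntegral.integral_neg]
  ring

variable {a₁ K}

theorem Theta1_add_I_mul_Theta2 (hK : IntervalIntegrable K volume (a₁ / 2) (π - a₁ / 2)) (lam : ℂ) :
    Theta1 a₁ K G lam + Complex.I * Theta2 a₁ K G lam =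
      ∫ x in (a₁ / 2)..(π - a₁ / 2),
        K x * Complex.exp (lam * ((π - 2 * x : ℝ) : ℂ) * Complex.I) := by
  rw [Theta1_eq_integral, Theta2_eq_integral, ← intervalIntegral.integral_const_mul,
    ← intervalIntegral.integral_add (hK.mul_continuousOn (by fun_prop))
      ((hK.mul_continuousOn (by fun_prop)).const_mul _)]
  simp only [Complex.exp_mul_I]
  congr! 2
  ring

theorem neg_one_zpow_mul_exp_int_mul_pi_sub (n : ℤ) (x : ℝ) :
    (-1) ^ n * Complex.exp (n * ((π - 2 * x : ℝ) : ℂ) * Complex.I) =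
      Complex.exp (2 * Complex.I * ((-n : ℤ) : ℂ) * x) := by
  have hsplit : (n : ℂ) * ((π - 2 * x : ℝ) : ℂ) * Complex.I =
      n * (π * Complex.I) + 2 * Complex.I * ((-n : ℤ) : ℂ) * x := by
    push_cast
    ring
  rw [hsplit, Complex.exp_add, Complex.exp_int_mul, Complex.exp_pi_mul_I, ← mul_assoc, ← mul_zpow]
  simp

theorem fourierCoeffOn_eq_Theta (ha₁ : 0 ≤ a₁) (hK : Integrable K)
    (hK0 : ∀ᵐ x, x ∉ Ioo (a₁ / 2) (π - a₁ / 2) → K x = 0) (n : ℤ) :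
    fourierCoeffOn pi_pos K n =
      (-1) ^ n / π * (Theta1 a₁ K G n + Complex.I * Theta2 a₁ K G n) := by
  have hinner : Ioo (a₁ / 2) (π - a₁ / 2) ⊆ Ioc (a₁ / 2) (π - a₁ / 2) := Ioo_subset_Ioc_self
  have houter : Ioo (a₁ / 2) (π - a₁ / 2) ⊆ Ioc 0 π :=
    (Ioo_subset_Ioo (by linarith) (by linarith)).trans Ioo_subset_Ioc_self
  have hint : ∫ x in (0 : ℝ)..π, fourier (-n) (x : AddCircle (π - 0)) • K x =
      (-1) ^ n * ∫ x in (a₁ / 2)..(π - a₁ / 2),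
        K x * Complex.exp (n * ((π - 2 * x : ℝ) : ℂ) * Complex.I) := by
    rw [intervalIntegral_eq_integral_of_ae_eq_zero, intervalIntegral_eq_integral_of_ae_eq_zero,
      ← integral_const_mul]
    · simp only [fourier_coe_pi_sub_zero, ← neg_one_zpow_mul_exp_int_mul_pi_sub, smul_eq_mul]
      congr! 2
      ring
    · exact hK0.mono fun x hx hx' => by rw [hx (mt (@hinner x) hx'), zero_mul]
    · exact hK0.mono fun x hx hx' => by rw [hx (mt (@houter x) hx'), smul_zero]
  rw [fourierCoeffOn_eq_integral, hint, Theta1_add_I_mul_Theta2 G hK.intervalIntegrable,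
    Complex.real_smul]
  push_cast
  ring

end Spectra

theorem K_recovered_from_spectra_general {a₁ : ℝ} (ha₁ : 0 ≤ a₁) {K G : ℝ → ℂ}
    (hK : MemLp K 2 (volume.restrict (Ioo 0 π)))
    (_hG : IntervalIntegrable G volume (a₁ / 2) (π - a₁ / 2))
    (hK0 : ∀ᵐ x, x ∉ Ioo (a₁ / 2) (π - a₁ / 2) → K x = 0) :
    Tendsto
      (fun s : Finset ℤ => eLpNorm
        (fun x : ℝ => K x - ∑ n ∈ s,
          ((-1 : ℂ) ^ n / (π : ℂ)) *
            (Theta1 a₁ K G (n : ℂ) + Complex.I * Theta2 a₁ K G (n : ℂ)) *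
            Complex.exp (2 * Complex.I * (n : ℂ) * (x : ℂ)))
        2 (volume.restrict (Ioo 0 π)))
      atTop (𝓝 0) := by
  have hKint : Integrable K := integrable_of_memLp_restrict_of_ae_eq_zero one_le_two
    measure_Ioo_lt_top.ne (Ioo_subset_Ioo (by linarith) (by linarith)) hK hK0
  rw [restrict_Ioo_eq_restrict_Ioc] at hK ⊢
  simpa only [fourierCoeffOn_eq_Theta G ha₁ hKint hK0, fourier_coe_pi_sub_zero] using
    tendsto_eLpNorm_sub_sum_fourierCoeffOn pi_pos hK

/-- The values of the characteristic functions at the integers uniquely recover `K`: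
with convergence in `L²(0,π)`,
`K(x) = Σ_{n ∈ ℤ} ((−1)ⁿ/π)·(Θ₁(n) + i·Θ₂(n))·e^{2inx}`. -/
theorem K_recovered_from_spectra (a₁ : ℝ) (ha₁ : 0 < a₁) (ha₁' : a₁ < π)
    (K G : ℝ → ℂ)
    (hK : MemLp K 2 (volume.restrict (Ioo 0 π)))
    (hG : MemLp G 2 (volume.restrict (Ioo 0 π)))
    (hK0 : ∀ᵐ x ∂(volume : Measure ℝ), x ∉ Ioo (a₁ / 2) (π - a₁ / 2) → K x = 0)
    (hG0 : ∀ᵐ x ∂(volume : Measure ℝ), x ∉ Ioo (a₁ / 2) (π - a₁ / 2) → G x = 0) :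
    Tendsto
      (fun N : ℕ => eLpNorm
        (fun x : ℝ => K x - ∑ n ∈ Finset.Icc (-(N : ℤ)) (N : ℤ),
          ((-1 : ℂ) ^ n / (π : ℂ)) *
            (Theta1 a₁ K G (n : ℂ) + Complex.I * Theta2 a₁ K G (n : ℂ)) *
            Complex.exp (2 * Complex.I * (n : ℂ) * (x : ℂ)))
        2 (volume.restrict (Ioo 0 π)))
      atTop (nhds 0) := by
  have hGint : Integrable G := integrable_of_memLp_restrict_of_ae_eq_zero one_le_two
    measure_Ioo_lt_top.ne (Ioo_subset_Ioo (by linarith) (by linarith)) hG hG0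
  exact (K_recovered_from_spectra_general ha₁.le hK hGint.intervalIntegrable hK0).comp
    Finset.tendsto_Icc_neg
end

section
/- The entire function Δ₁ has infinitely many zeros accumulating near the integers: there exist N ∈ ℕ and a sequence (λ_n)_{n ∈ ℤ, |n| ≥ N} of complex numbers such that for every n with |n| ≥ N, λ_n is the unique zero of Δ₁ in the disk {λ ∈ ℂ : |λ − n| < 1/2}, and λ_n = n + κ_n with κ_n → 0 as |n| → ∞. -/
open MeasureTheory Real Set Filter

/-!
Substituting `u = π - 2x` turns the two integrals in `Δ₁` into the Fourier–Laplace transform `r` of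
an integrable function on a bounded segment. For fixed `z`, the Riemann–Lebesgue lemma gives
`r (n + z) → 0` as `|n| → ∞`. The translates of `r` by integers are uniformly bounded on horizontal
strips, hence equicontinuous by the Schwarz lemma, so the convergence is locally uniform in `z`.
Consequently `(-1) ^ n * Δ₁ (n + z)` tends to `sin (π z)` locally uniformly. The only zero of the
limit in `|z| ≤ 1/2` is the simple zero `0`. By a version of Hurwitz's theorem, the approximating
functions eventually have exactly one zero `κ n` in this disk, and `κ n → 0`.
-/

open Metric Topology
open scoped NNReal

section UniformConvergence

theorem tendstoLocallyUniformly_of_equicontinuous {ι X Y : Type*} [TopologicalSpace X]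
    [LocallyCompactSpace X] [UniformSpace Y] {F : ι → X → Y} {f : X → Y} {l : Filter ι}
    (hF : Equicontinuous F) (hlim : ∀ x, Tendsto (F · x) l (𝓝 (f x))) :
    TendstoLocallyUniformly F f l :=
  tendstoLocallyUniformly_iff_forall_isCompact.2 <|
    UniformOnFun.tendsto_iff_tendstoUniformlyOn.1 <|
      (EquicontinuousOn.tendsto_uniformOnFun_iff_pi (𝔖 := {K | IsCompact K}) (fun _ hK ↦ hK)
        sUnion_isCompact_eq_univ (fun _ _ ↦ hF.equicontinuousOn _) l f).2 (tendsto_pi_nhds.2 hlim)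

theorem equicontinuousAt_of_differentiableAt_of_norm_le {ι E : Type*}
    [NormedAddCommGroup E] [NormedSpace ℂ E] {F : ι → ℂ → E} {z₀ : ℂ} {M : ℝ}
    (hF : ∀ᶠ z in 𝓝 z₀, ∀ i, DifferentiableAt ℂ (F i) z ∧ ‖F i z‖ ≤ M) :
    EquicontinuousAt F z₀ := by
  obtain ⟨r, hr, hball⟩ := Metric.eventually_nhds_iff_ball.1 hF
  have hmodulus : Tendsto (fun z ↦ (M + M) / r * dist z z₀) (𝓝 z₀) (𝓝 0) :=
    Continuous.tendsto' (by fun_prop) _ _ (by simp)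
  refine equicontinuousAt_of_continuity_modulus _ hmodulus F ?_
  filter_upwards [ball_mem_nhds z₀ hr] with z hz i
  rw [dist_comm]
  refine Complex.dist_le_div_mul_dist_of_mapsTo_ball
    (fun w hw ↦ (hball w hw i).1.differentiableWithinAt) (fun w hw ↦ ?_) hz
  exact (dist_le_norm_add_norm _ _).trans
    (add_le_add (hball w hw i).2 (hball z₀ (mem_ball_self hr) i).2)

theorem eventually_forall_ne_zero {ι X E : Type*} [TopologicalSpace X] [NormedAddCommGroup E]
    {F : ι → X → E} {f : X → E} {l : Filter ι} {K : Set X} (hF : TendstoUniformlyOn F f l K)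
    (hK : IsCompact K) (hf : ContinuousOn f K) (hf₀ : ∀ x ∈ K, f x ≠ 0) :
    ∀ᶠ i in l, ∀ x ∈ K, F i x ≠ 0 := by
  obtain ⟨m, hm, hmf⟩ := hK.exists_forall_le' hf.norm fun x hx ↦ norm_pos_iff.2 (hf₀ x hx)
  filter_upwards [Metric.tendstoUniformlyOn_iff.1 hF m hm] with i hi x hx h₀
  have := hi x hx
  rw [h₀, dist_zero_right] at this
  exact (hmf x hx).not_gt this

theorem eventually_forall_mem_of_eq_zero {ι X E : Type*} [TopologicalSpace X]
    [NormedAddCommGroup E] {F : ι → X → E} {f : X → E} {l : Filter ι} {K V : Set X}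
    (hF : TendstoUniformlyOn F f l K) (hK : IsCompact K) (hf : ContinuousOn f K) (hV : IsOpen V)
    (hfV : ∀ x ∈ K, f x = 0 → x ∈ V) :
    ∀ᶠ i in l, ∀ x ∈ K, F i x = 0 → x ∈ V := by
  filter_upwards [eventually_forall_ne_zero (hF.mono sdiff_subset) (hK.diff hV)
    (hf.mono sdiff_subset) fun x hx h ↦ hx.2 (hfV x hx.1 h)] with i hi x hx hFx
  exact by_contra fun hxV ↦ hi x ⟨hx, hxV⟩ hFx

end UniformConvergence

section SimpleZeros

theorem existsUnique_zero_of_approximatesLinearOn {𝕜 E F : Type*} [NontriviallyNormedField 𝕜]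
    [NormedAddCommGroup E] [NormedSpace 𝕜 E] [CompleteSpace E] [NormedAddCommGroup F]
    [NormedSpace 𝕜 F] {f : E → F} {f' : E ≃L[𝕜] F} {b : E} {r : ℝ} {c : ℝ≥0} (hr : 0 ≤ r)
    (hf : ApproximatesLinearOn f (f' : E →L[𝕜] F) (closedBall b r) c)
    (hc : c < ‖(f'.symm : F →L[𝕜] E)‖₊⁻¹)
    (hb : ‖f b‖ ≤ (‖(f'.symm : F →L[𝕜] E)‖⁻¹ - c) * r) :
    ∃! z, z ∈ closedBall b r ∧ f z = 0 := by
  obtain ⟨z, hz, hfz⟩ := hf.surjOn_closedBall_of_nonlinearRightInverse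
    f'.toNonlinearRightInverse hr subset_rfl
    (show (0 : F) ∈ closedBall (f b) _ by rwa [mem_closedBall, dist_zero_left])
  exact ⟨z, ⟨hz, hfz⟩, fun w hw ↦ hf.injOn (.inr hc) hw.1 hz (hw.2.trans hfz.symm)⟩

theorem existsUnique_zero_of_norm_deriv_sub_le {𝕜 : Type*} [RCLike 𝕜] {f : 𝕜 → 𝕜} {b f' : 𝕜}
    {r : ℝ} {c : ℝ≥0} (hr : 0 ≤ r) (hf : ∀ z ∈ closedBall b r, DifferentiableAt 𝕜 f z)
    (hderiv : ∀ z ∈ closedBall b r, ‖deriv f z - f'‖ ≤ c) (hc : c < ‖f'‖₊)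
    (hb : ‖f b‖ ≤ (‖f'‖ - c) * r) :
    ∃! z, z ∈ closedBall b r ∧ f z = 0 := by
  have hf' : f' ≠ 0 := nnnorm_pos.1 (pos_of_gt hc)
  set L := ContinuousLinearEquiv.unitsEquivAut 𝕜 (Units.mk0 f' hf') with hL
  have hnorm : ‖(L.symm : 𝕜 →L[𝕜] 𝕜)‖₊⁻¹ = ‖f'‖₊ := by
    have : (L.symm : 𝕜 →L[𝕜] 𝕜) = .toSpanSingleton 𝕜 f'⁻¹ := by ext; simp [hL]
    ext
    simp [this]
  have happrox : ApproximatesLinearOn f (L : 𝕜 →L[𝕜] 𝕜) (closedBall b r) c := by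
    intro x hx y hy
    have := (convex_closedBall b r).norm_image_sub_le_of_norm_hasDerivWithin_le
      (f := fun z ↦ f z - z * f') (fun z hz ↦
        ((hf z hz).hasDerivAt.sub ((hasDerivAt_id z).mul_const f')).hasDerivWithinAt)
      (by simpa using hderiv) hy hx
    convert this using 2
    simp [hL]
    ring
  refine existsUnique_zero_of_approximatesLinearOn hr happrox (hnorm ▸ hc) ?_
  rwa [← coe_nnnorm (L.symm : 𝕜 →L[𝕜] 𝕜), ← NNReal.coe_inv, hnorm]

variable {ι : Type*} {l : Filter ι} {F : ι → ℂ → ℂ} {f : ℂ → ℂ} {U s : Set ℂ} {z₀ : ℂ}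

theorem eventually_forall_closedBall_norm_deriv_sub_le [NeBot l] (hU : IsOpen U) (hz₀ : z₀ ∈ U)
    (hF : TendstoLocallyUniformlyOn F f l U) (hd : ∀ᶠ i in l, DifferentiableOn ℂ (F i) U)
    {c : ℝ} (hc : 0 < c) :
    ∀ᶠ r in 𝓝[>] 0, ∀ᶠ i in l, ∀ z ∈ closedBall z₀ r, ‖deriv (F i) z - deriv f z₀‖ ≤ c := by
  have hf : ContinuousAt (deriv f) z₀ :=
    ((hF.differentiableOn hd hU).deriv hU).continuousOn.continuousAt (hU.mem_nhds hz₀)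
  obtain ⟨t, ht, hFt⟩ :=
    Metric.tendstoLocallyUniformlyOn_iff.1 (hF.deriv hd hU) (c / 2) (half_pos hc) z₀ hz₀
  rw [hU.nhdsWithin_eq hz₀] at ht
  have hball := eventually_closedBall_subset <|
    inter_mem ht (hf.preimage_mem_nhds (ball_mem_nhds _ (half_pos hc)))
  filter_upwards [nhdsWithin_le_nhds hball] with r hr
  filter_upwards [hFt] with i hi z hz
  rw [← dist_eq_norm]
  calc dist (deriv (F i) z) (deriv f z₀)
      ≤ dist (deriv (F i) z) (deriv f z) + dist (deriv f z) (deriv f z₀) := dist_triangle _ _ _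
    _ ≤ c / 2 + c / 2 := add_le_add (dist_comm (deriv f z) _ ▸ (hi z (hr hz).1).le) (hr hz).2.le
    _ = c := add_halves c

theorem eventually_existsUnique_zero_closedBall [NeBot l] (hU : IsOpen U) (hz₀ : z₀ ∈ U)
    (hF : TendstoLocallyUniformlyOn F f l U) (hd : ∀ᶠ i in l, DifferentiableOn ℂ (F i) U)
    (hf₀ : f z₀ = 0) (hf' : deriv f z₀ ≠ 0) :
    ∀ᶠ r in 𝓝[>] 0, ∀ᶠ i in l, ∃! z, z ∈ closedBall z₀ r ∧ F i z = 0 := by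
  have hpos : 0 < ‖deriv f z₀‖₊ := nnnorm_pos.2 hf'
  filter_upwards [self_mem_nhdsWithin,
    eventually_forall_closedBall_norm_deriv_sub_le hU hz₀ hF hd (half_pos (norm_pos_iff.2 hf')),
    nhdsWithin_le_nhds (eventually_closedBall_subset (hU.mem_nhds hz₀))] with r hr hderiv hrU
  have hval : Tendsto (fun i ↦ ‖F i z₀‖) l (𝓝 0) := by
    simpa [hf₀] using (hF.tendsto_at hz₀).norm
  have hbound : 0 < (‖deriv f z₀‖ - (‖deriv f z₀‖₊ / 2 : ℝ≥0)) * r := by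
    refine mul_pos (sub_pos.2 ?_) hr
    exact_mod_cast half_lt_self hpos
  filter_upwards [hderiv, hd, hval.eventually_le_const hbound] with i hi hdi hvi
  exact existsUnique_zero_of_norm_deriv_sub_le (mem_Ioi.1 hr).le
    (fun z hz ↦ hdi.differentiableAt (hU.mem_nhds (hrU hz))) (by simpa using hi)
    (half_lt_self hpos) hvi

theorem exists_tendsto_forall_eq_zero_iff [NeBot l] (hU : IsOpen U) (hs : IsCompact s)
    (hsU : s ⊆ U) (hsz₀ : s ∈ 𝓝 z₀) (hF : TendstoLocallyUniformlyOn F f l U)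
    (hd : ∀ᶠ i in l, DifferentiableOn ℂ (F i) U) (hf₀ : ∀ z ∈ s, f z = 0 ↔ z = z₀)
    (hf' : deriv f z₀ ≠ 0) :
    ∃ ζ : ι → ℂ, Tendsto ζ l (𝓝 z₀) ∧ ∀ᶠ i in l, ∀ z ∈ s, F i z = 0 ↔ z = ζ i := by
  have hz₀ : z₀ ∈ s := mem_of_mem_nhds hsz₀
  have hfs : ContinuousOn f s := (hF.differentiableOn hd hU).continuousOn.mono hsU
  have hFs : TendstoUniformlyOn F f l s :=
    (tendstoLocallyUniformlyOn_iff_forall_isCompact hU).1 hF s hsU hs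
  have hzeros : ∀ V ∈ 𝓝 z₀, ∀ᶠ i in l, ∀ z ∈ s, F i z = 0 → z ∈ V := by
    intro V hV
    filter_upwards [eventually_forall_mem_of_eq_zero hFs hs hfs isOpen_interior fun z hz h ↦
      (hf₀ z hz).1 h ▸ mem_interior_iff_mem_nhds.2 hV] with i hi z hz hFz
    exact interior_subset (hi z hz hFz)
  have hunique : ∀ᶠ i in l, ∃ ζ ∈ s, ∀ z ∈ s, F i z = 0 ↔ z = ζ := by
    have hsub : ∀ᶠ r in 𝓝[>] (0 : ℝ), closedBall z₀ r ⊆ s :=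
      nhdsWithin_le_nhds (eventually_closedBall_subset hsz₀)
    have hball := eventually_existsUnique_zero_closedBall hU (hsU hz₀) hF hd
      ((hf₀ z₀ hz₀).2 rfl) hf'
    obtain ⟨r, ⟨hr, hrs⟩, hrpos⟩ := ((hball.and hsub).and self_mem_nhdsWithin).exists
    filter_upwards [hr, hzeros _ (closedBall_mem_nhds z₀ hrpos)] with i hi hzi
    obtain ⟨ζ, ⟨hζ, hFζ⟩, huniq⟩ := hi
    exact ⟨ζ, hrs hζ, fun z hz ↦ ⟨fun h ↦ huniq z ⟨hzi z hz h, h⟩, fun h ↦ h ▸ hFζ⟩⟩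
  obtain ⟨ζ, hζ⟩ := hunique.choice
  refine ⟨ζ, tendsto_iff_eventually.2 fun V hV ↦ ?_, hζ.mono fun i hi ↦ hi.2⟩
  filter_upwards [hζ, hzeros V hV] with i hi hVi
  exact hVi (ζ i) hi.1 ((hi.2 _ hi.1).2 rfl)

end SimpleZeros

section IntervalIntegrable

theorem intervalIntegrable_of_memLp_restrict {E : Type*} [NormedAddCommGroup E] {f : ℝ → E}
    {μ : Measure ℝ} [IsLocallyFiniteMeasure μ] {p : ENNReal} {s : Set ℝ} {a b : ℝ}
    (hf : MemLp f p (μ.restrict s)) (hp : 1 ≤ p) (hs : uIoc a b ⊆ s) :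
    IntervalIntegrable f μ a b := by
  have : IsFiniteMeasure (μ.restrict (uIoc a b)) :=
    isFiniteMeasure_restrict.2 <|
      ((measure_mono uIoc_subset_uIcc).trans_lt isCompact_uIcc.measure_lt_top).ne
  exact intervalIntegrable_iff.2 <|
    (hf.mono_measure (Measure.restrict_mono hs le_rfl)).integrable hp

theorem intervalIntegrable_comp_sub_div_two {E : Type*} [NormedAddCommGroup E] {f : ℝ → E}
    {a c : ℝ} (hf : IntervalIntegrable f volume (a / 2) (c - a / 2)) :
    IntervalIntegrable (fun u ↦ f ((c - u) / 2)) volume (-(c - a)) (c - a) := by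
  have h := (hf.comp_mul_left (c := 1 / 2)).comp_sub_left c
  convert h.symm using 2 <;> ring_nf

end IntervalIntegrable

section FourierLaplace

variable {E : Type*} [NormedAddCommGroup E] [NormedSpace ℂ E] {a b : ℝ} {f : ℝ → E}

/-- The Fourier–Laplace transform `z ↦ ∫ₐᵇ e^{izu} f(u) du` of a function on the segment `[a, b]`,
at complex frequencies `z`. -/
noncomputable def fourierLaplace (f : ℝ → E) (a b : ℝ) (z : ℂ) : E :=
  ∫ u in a..b, Complex.exp (z * u * Complex.I) • f u

theorem norm_cexp_mul_ofReal_mul_I (z : ℂ) (u : ℝ) :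
    ‖Complex.exp (z * u * Complex.I)‖ = Real.exp (-(z.im * u)) := by
  simp [Complex.norm_exp]

theorem intervalIntegrable_cexp_smul (hf : IntervalIntegrable f volume a b) (z : ℂ) :
    IntervalIntegrable (fun u : ℝ ↦ Complex.exp (z * u * Complex.I) • f u) volume a b :=
  hf.continuousOn_smul (by fun_prop)

theorem norm_cexp_mul_ofReal_mul_I_le {z : ℂ} {u M : ℝ} (hz : |z.im| ≤ M) (hu : u ∈ uIoc a b) :
    ‖Complex.exp (z * u * Complex.I)‖ ≤ Real.exp (M * max |a| |b|) := by
  rw [norm_cexp_mul_ofReal_mul_I, Real.exp_le_exp]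
  calc -(z.im * u) ≤ |z.im| * |u| := abs_mul z.im u ▸ neg_le_abs _
    _ ≤ M * max |a| |b| := by
      gcongr
      · exact (abs_nonneg _).trans hz
      · rcases mem_uIcc.1 (uIoc_subset_uIcc hu) with ⟨h₁, h₂⟩ | ⟨h₁, h₂⟩
        · exact abs_le_max_abs_abs h₁ h₂
        · exact max_comm |a| |b| ▸ abs_le_max_abs_abs h₁ h₂

theorem norm_fourierLaplace_le (hf : IntervalIntegrable f volume a b) {z : ℂ} {M : ℝ}
    (hz : |z.im| ≤ M) :
    ‖fourierLaplace f a b z‖ ≤ |∫ u in a..b, Real.exp (M * max |a| |b|) * ‖f u‖| := by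
  refine intervalIntegral.norm_integral_le_abs_of_norm_le ?_ (hf.norm.const_mul _)
  filter_upwards [ae_restrict_mem measurableSet_uIoc] with u hu
  rw [norm_smul]
  gcongr
  exact norm_cexp_mul_ofReal_mul_I_le hz hu

theorem differentiable_fourierLaplace (hf : IntervalIntegrable f volume a b) :
    Differentiable ℂ (fourierLaplace f a b) := by
  intro z₀
  refine (intervalIntegral.hasDerivAt_integral_of_dominated_loc_of_deriv_le
    (F' := fun z u ↦ (u * Complex.I * Complex.exp (z * u * Complex.I)) • f u)
    (bound := fun u ↦ |u| * Real.exp ((|z₀.im| + 1) * max |a| |b|) * ‖f u‖)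
    (ball_mem_nhds z₀ one_pos)
    (.of_forall fun z ↦ (intervalIntegrable_cexp_smul hf z).def'.aestronglyMeasurable)
    (intervalIntegrable_cexp_smul hf z₀)
    (hf.continuousOn_smul (f := fun u : ℝ ↦ u * Complex.I * Complex.exp (z₀ * u * Complex.I))
      (by fun_prop)).def'.aestronglyMeasurable
    (.of_forall fun u hu z hz ↦ ?_)
    (hf.norm.continuousOn_mul (by fun_prop)) (.of_forall fun u _ z _ ↦ ?_)).2.differentiableAt
  · have hz : |z.im| ≤ |z₀.im| + 1 := by
      have := (Complex.abs_im_le_norm (z - z₀)).trans (mem_ball_iff_norm.1 hz).le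
      rw [Complex.sub_im] at this
      linarith [abs_sub_abs_le_abs_sub z.im z₀.im]
    rw [norm_smul, norm_mul, norm_mul, Complex.norm_I, mul_one, Complex.norm_real, Real.norm_eq_abs]
    gcongr
    exact norm_cexp_mul_ofReal_mul_I_le hz hu
  · have : HasDerivAt (fun z : ℂ ↦ z * u * Complex.I) (u * Complex.I) z := by
      simpa using ((hasDerivAt_id z).mul_const (u : ℂ)).mul_const Complex.I
    simpa [mul_comm] using this.cexp.smul_const (f u)

theorem tendsto_fourierLaplace_ofReal_add (f : ℝ → E) (a b : ℝ) (z : ℂ) :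
    Tendsto (fun t : ℝ ↦ fourierLaplace f a b (t + z)) (cocompact ℝ) (𝓝 0) := by
  -- Absorbing the factor `e^{izu}` into `f` leaves the classical Riemann–Lebesgue lemma.
  set g : ℝ → E := (uIoc a b).indicator fun u ↦ Complex.exp (z * u * Complex.I) • f u with hg
  have hscale : Tendsto (fun t : ℝ ↦ t * (-(2 * π))⁻¹) (cocompact ℝ) (cocompact ℝ) :=
    (Homeomorph.mulRight₀ (-(2 * π))⁻¹ (by simp [pi_ne_zero])).isClosedEmbedding.tendsto_cocompact
  have hlim := ((Real.tendsto_integral_exp_smul_cocompact g).comp hscale).const_smul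
    (if a ≤ b then (1 : ℝ) else -1)
  rw [smul_zero] at hlim
  refine hlim.congr fun t ↦ ?_
  rw [fourierLaplace, intervalIntegral.intervalIntegral_eq_integral_uIoc, Function.comp_apply,
    ← integral_indicator measurableSet_uIoc]
  congr 2 with u
  by_cases hu : u ∈ uIoc a b
  · rw [hg, indicator_of_mem hu, indicator_of_mem hu, Circle.smul_def, smul_smul,
      Real.fourierChar_apply, ← Complex.exp_add]
    congr 2
    push_cast
    field_simp
  · simp [hg, hu]

theorem tendstoLocallyUniformly_fourierLaplace_ofReal_add {ι : Type*} {l : Filter ι} {t : ι → ℝ}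
    (hf : IntervalIntegrable f volume a b) (ht : Tendsto t l (cocompact ℝ)) :
    TendstoLocallyUniformly (fun i z ↦ fourierLaplace f a b (t i + z)) 0 l := by
  refine tendstoLocallyUniformly_of_equicontinuous (fun z₀ ↦ ?_)
    fun z ↦ (tendsto_fourierLaplace_ofReal_add f a b z).comp ht
  refine equicontinuousAt_of_differentiableAt_of_norm_le
    (M := |∫ u in a..b, Real.exp ((|z₀.im| + 1) * max |a| |b|) * ‖f u‖|) ?_
  have him : ∀ᶠ z : ℂ in 𝓝 z₀, |z.im| ≤ |z₀.im| + 1 :=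
    (continuous_abs.comp Complex.continuous_im).continuousAt.eventually_le_const
      (lt_add_one |z₀.im|)
  filter_upwards [him] with z hz i
  exact ⟨((differentiable_fourierLaplace hf).comp (differentiable_id.const_add _)) z,
    norm_fourierLaplace_le hf (by simpa using hz)⟩

theorem fourierLaplace_comp_neg (f : ℝ → E) (a b : ℝ) (z : ℂ) :
    fourierLaplace (fun u ↦ f (-u)) (-b) (-a) z = fourierLaplace f a b (-z) := by
  rw [fourierLaplace, fourierLaplace, ← intervalIntegral.integral_comp_neg]
  simp

theorem fourierLaplace_add_comp_neg {c : ℝ} {g : ℝ → E} (hf : IntervalIntegrable f volume (-c) c)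
    (hg : IntervalIntegrable g volume (-c) c) (z : ℂ) :
    fourierLaplace (fun u ↦ f u + g (-u)) (-c) c z
      = fourierLaplace f (-c) c z + fourierLaplace g (-c) c (-z) := by
  have hg' : IntervalIntegrable (fun u ↦ g (-u)) volume (-c) c := by
    simpa using hg.symm.comp_sub_left 0
  rw [← fourierLaplace_comp_neg, neg_neg, fourierLaplace, fourierLaplace, fourierLaplace,
    ← intervalIntegral.integral_add (intervalIntegrable_cexp_smul hf z)
      (intervalIntegrable_cexp_smul hg' z)]
  simp only [smul_add]

end FourierLaplace

section SinePerturbation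

theorem sin_pi_mul_int_add (n : ℤ) (z : ℂ) :
    Complex.sin (π * (n + z)) = (-1) ^ n * Complex.sin (π * z) := by
  rw [mul_add, add_comm, mul_comm (π : ℂ) n, Complex.sin_antiperiodic.add_int_mul_eq,
    Int.cast_negOnePow]

theorem hasDerivAt_sin_pi_mul (z : ℂ) :
    HasDerivAt (fun z : ℂ ↦ Complex.sin (π * z)) (π * Complex.cos (π * z)) z := by
  simpa [mul_comm] using ((hasDerivAt_id z).const_mul (π : ℂ)).csin

theorem sin_pi_mul_eq_zero_iff {z : ℂ} : Complex.sin (π * z) = 0 ↔ ∃ n : ℤ, z = n := by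
  simp [Complex.sin_eq_zero_iff, mul_comm (π : ℂ), pi_ne_zero]

theorem sin_pi_mul_eq_zero_iff_of_norm_lt_one {z : ℂ} (hz : ‖z‖ < 1) :
    Complex.sin (π * z) = 0 ↔ z = 0 := by
  refine sin_pi_mul_eq_zero_iff.trans ⟨?_, fun h ↦ ⟨0, by simpa using h⟩⟩
  rintro ⟨n, rfl⟩
  rw [Complex.norm_intCast] at hz
  have hn : n = 0 := Int.abs_lt_one_iff.1 (by exact_mod_cast hz)
  rw [hn, Int.cast_zero]

theorem tendstoLocallyUniformly_neg_one_zpow_mul_sin_add {r : ℂ → ℂ} {l : Filter ℤ}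
    (hlim : TendstoLocallyUniformly (fun (n : ℤ) z ↦ r (n + z)) 0 l) :
    TendstoLocallyUniformly
      (fun (n : ℤ) z ↦ (-1) ^ n * (Complex.sin (π * (n + z)) + r (n + z)))
      (fun z ↦ Complex.sin (π * z)) l := by
  refine Metric.tendstoLocallyUniformly_iff.2 fun ε hε z₀ ↦ ?_
  obtain ⟨t, ht, hrt⟩ := Metric.tendstoLocallyUniformly_iff.1 hlim ε hε z₀
  refine ⟨t, ht, hrt.mono fun n hn z hz ↦ ?_⟩
  have hsq : ((-1 : ℂ) ^ n) * (-1) ^ n = 1 := by rw [← mul_zpow]; simp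
  rw [sin_pi_mul_int_add, mul_add, ← mul_assoc, hsq, one_mul, dist_self_add_right, norm_mul,
    norm_zpow, norm_neg, norm_one, one_zpow, one_mul]
  simpa using hn z hz

theorem exists_tendsto_forall_sin_add_eq_zero_iff {r : ℂ → ℂ} {l : Filter ℤ} [NeBot l]
    (hr : Differentiable ℂ r) (hlim : TendstoLocallyUniformly (fun (n : ℤ) z ↦ r (n + z)) 0 l)
    {ρ : ℝ} (hρ : 0 < ρ) (hρ' : ρ < 1) :
    ∃ κ : ℤ → ℂ, Tendsto κ l (𝓝 0) ∧ ∀ᶠ n : ℤ in l, ∀ z ∈ closedBall (0 : ℂ) ρ,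
      Complex.sin (π * (n + z)) + r (n + z) = 0 ↔ z = κ n := by
  obtain ⟨κ, hκ, hzero⟩ := exists_tendsto_forall_eq_zero_iff isOpen_univ
    (isCompact_closedBall (0 : ℂ) ρ) (subset_univ _) (closedBall_mem_nhds _ hρ)
    (tendstoLocallyUniformly_neg_one_zpow_mul_sin_add hlim).tendstoLocallyUniformlyOn
    (.of_forall fun n ↦ Differentiable.differentiableOn (by fun_prop))
    (fun z hz ↦ sin_pi_mul_eq_zero_iff_of_norm_lt_one
      ((mem_closedBall_zero_iff.1 hz).trans_lt hρ'))
    (by simp [(hasDerivAt_sin_pi_mul 0).deriv, pi_ne_zero])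
  exact ⟨κ, hκ, by simpa [zpow_ne_zero] using hzero⟩

end SinePerturbation

section Delta1

theorem exists_nat_forall_le_abs_of_eventually_cofinite {p : ℤ → Prop}
    (hp : ∀ᶠ n in cofinite, p n) : ∃ N : ℕ, ∀ n : ℤ, (N : ℤ) ≤ |n| → p n := by
  rw [Int.cofinite_eq, ← comap_abs_atTop, eventually_comap, eventually_atTop] at hp
  obtain ⟨m, hm⟩ := hp
  exact ⟨m.toNat, fun n hn ↦ hm |n| ((Int.self_le_toNat m).trans hn) n rfl⟩

theorem Delta1_eq_sin_add_integral {a₁ : ℝ} {K G : ℝ → ℂ}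
    (hK : IntervalIntegrable K volume (a₁ / 2) (π - a₁ / 2))
    (hG : IntervalIntegrable G volume (a₁ / 2) (π - a₁ / 2)) (z : ℂ) :
    Delta1 a₁ K G z = Complex.sin (π * z) + ∫ u in -(π - a₁)..(π - a₁),
      (K ((π - u) / 2) * Complex.cos (z * u) - G ((π - u) / 2) * Complex.sin (z * u)) / 2 := by
  set F : ℝ → ℂ := fun u ↦
    K ((π - u) / 2) * Complex.cos (z * u) - G ((π - u) / 2) * Complex.sin (z * u) with hF
  have hF_comp (x : ℝ) : F (π - 2 * x) = K x * Complex.cos (z * ((π - 2 * x : ℝ) : ℂ))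
      - G x * Complex.sin (z * ((π - 2 * x : ℝ) : ℂ)) := by
    simp only [hF, show (π - (π - 2 * x)) / 2 = x by ring]
  have hsubst : ∫ x in a₁ / 2..π - a₁ / 2, F (π - 2 * x)
      = (∫ u in -(π - a₁)..(π - a₁), F u) / 2 := by
    rw [intervalIntegral.integral_comp_sub_mul F two_ne_zero, mul_sub,
      mul_div_cancel₀ _ two_ne_zero, show π - (2 * π - a₁) = -(π - a₁) by ring,
      Complex.real_smul, Complex.ofReal_inv, Complex.ofReal_ofNat, div_eq_inv_mul]
  rw [intervalIntegral.integral_div, ← hsubst, Delta1, add_sub_assoc,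
    ← intervalIntegral.integral_sub (hK.mul_continuousOn (by fun_prop))
      (hG.mul_continuousOn (by fun_prop))]
  simp only [hF_comp]

theorem exists_Delta1_eq_sin_add_fourierLaplace {a₁ : ℝ} {K G : ℝ → ℂ}
    (hK : IntervalIntegrable K volume (a₁ / 2) (π - a₁ / 2))
    (hG : IntervalIntegrable G volume (a₁ / 2) (π - a₁ / 2)) :
    ∃ w : ℝ → ℂ, IntervalIntegrable w volume (-(π - a₁)) (π - a₁) ∧
      ∀ z, Delta1 a₁ K G z = Complex.sin (π * z) + fourierLaplace w (-(π - a₁)) (π - a₁) z := by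
  set c := π - a₁
  -- Euler's formula: `p u * exp (i z u) + q u * exp (-i z u)` is the integrand of
  -- `Delta1_eq_sin_add_integral`.
  set p : ℝ → ℂ := fun u ↦ (K ((π - u) / 2) + G ((π - u) / 2) * Complex.I) / 4 with hp_def
  set q : ℝ → ℂ := fun u ↦ (K ((π - u) / 2) - G ((π - u) / 2) * Complex.I) / 4 with hq_def
  have hk := intervalIntegrable_comp_sub_div_two hK
  have hg := (intervalIntegrable_comp_sub_div_two hG).mul_const Complex.I
  have hp : IntervalIntegrable p volume (-c) c := (hk.add hg).div_const 4
  have hq : IntervalIntegrable q volume (-c) c := (hk.sub hg).div_const 4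
  refine ⟨fun u ↦ p u + q (-u), hp.add (by simpa using hq.symm.comp_sub_left 0), fun z ↦ ?_⟩
  rw [fourierLaplace_add_comp_neg hp hq, Delta1_eq_sin_add_integral hK hG, fourierLaplace,
    fourierLaplace, ← intervalIntegral.integral_add (intervalIntegrable_cexp_smul hp z)
      (intervalIntegrable_cexp_smul hq (-z))]
  congr 2 with u
  have hexp : Complex.exp (-z * u * Complex.I)
      = Complex.cos (z * u) - Complex.sin (z * u) * Complex.I := by
    rw [neg_mul, Complex.exp_mul_I, Complex.cos_neg, Complex.sin_neg, neg_mul, sub_eq_add_neg]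
  simp only [smul_eq_mul, hexp, Complex.exp_mul_I, hp_def, hq_def]
  linear_combination -(G ((π - u) / 2) * Complex.sin (z * u) / 2) * Complex.I_sq

theorem Delta1_eigenvalue_asymptotics_general (a₁ : ℝ) (K G : ℝ → ℂ)
    (hK : IntervalIntegrable K volume (a₁ / 2) (π - a₁ / 2))
    (hG : IntervalIntegrable G volume (a₁ / 2) (π - a₁ / 2)) :
    ∃ (N : ℕ) (lam : ℤ → ℂ),
      (∀ n : ℤ, (N : ℤ) ≤ |n| →
        Delta1 a₁ K G (lam n) = 0 ∧ ‖lam n - (n : ℂ)‖ < 1 / 2 ∧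
        ∀ μ : ℂ, ‖μ - (n : ℂ)‖ < 1 / 2 → Delta1 a₁ K G μ = 0 → μ = lam n) ∧
      Tendsto (fun n : ℤ => lam n - (n : ℂ)) cofinite (nhds 0) := by
  obtain ⟨w, hw, hΔ⟩ := exists_Delta1_eq_sin_add_fourierLaplace hK hG
  have hlim := tendstoLocallyUniformly_fourierLaplace_ofReal_add hw Int.tendsto_coe_cofinite
  simp only [Complex.ofReal_intCast] at hlim
  obtain ⟨κ, hκ, hzero⟩ := exists_tendsto_forall_sin_add_eq_zero_iff
    (differentiable_fourierLaplace hw) hlim (half_pos one_pos) one_half_lt_one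
  simp only [← hΔ] at hzero
  obtain ⟨N, hN⟩ := exists_nat_forall_le_abs_of_eventually_cofinite <|
    hzero.and (hκ.eventually (ball_mem_nhds 0 (half_pos one_pos)))
  refine ⟨N, fun n ↦ n + κ n, fun n hn ↦ ?_, by simpa using hκ⟩
  obtain ⟨hiff, hball⟩ := hN n hn
  refine ⟨(hiff _ (ball_subset_closedBall hball)).2 rfl, by simpa using hball, fun μ hμ hΔμ ↦ ?_⟩
  have hμκ : μ - n = κ n := (hiff _ (by simpa using hμ.le)).1 (by simpa using hΔμ)
  exact sub_eq_iff_eq_add'.1 hμκ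

/-- The entire function `Δ₁` has infinitely many zeros accumulating near the integers:
there are `N ∈ ℕ` and complex numbers `λ_n` (`|n| ≥ N`) such that `λ_n` is the unique
zero of `Δ₁` in the disk `{|λ − n| < 1/2}`, and `λ_n = n + κ_n` with `κ_n → 0`. -/
theorem Delta1_eigenvalue_asymptotics (a₁ : ℝ) (ha₁ : 0 < a₁) (ha₁' : a₁ < π)
    (K G : ℝ → ℂ)
    (hK : MemLp K 2 (volume.restrict (Ioo 0 π)))
    (hG : MemLp G 2 (volume.restrict (Ioo 0 π)))
    (hK0 : ∀ᵐ x ∂(volume : Measure ℝ), x ∉ Ioo (a₁ / 2) (π - a₁ / 2) → K x = 0)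
    (hG0 : ∀ᵐ x ∂(volume : Measure ℝ), x ∉ Ioo (a₁ / 2) (π - a₁ / 2) → G x = 0) :
    ∃ (N : ℕ) (lam : ℤ → ℂ),
      (∀ n : ℤ, (N : ℤ) ≤ |n| →
        Delta1 a₁ K G (lam n) = 0 ∧ ‖lam n - (n : ℂ)‖ < 1 / 2 ∧
        ∀ μ : ℂ, ‖μ - (n : ℂ)‖ < 1 / 2 → Delta1 a₁ K G μ = 0 → μ = lam n) ∧
      Tendsto (fun n : ℤ => lam n - (n : ℂ)) cofinite (nhds 0) := by
  have hsub : uIoc (a₁ / 2) (π - a₁ / 2) ⊆ Ioo 0 π :=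
    uIoc_subset_uIcc.trans <|
      ordConnected_Ioo.uIcc_subset ⟨by linarith, by linarith⟩ ⟨by linarith, by linarith⟩
  exact Delta1_eigenvalue_asymptotics_general a₁ K G
    (intervalIntegrable_of_memLp_restrict hK one_le_two hsub)
    (intervalIntegrable_of_memLp_restrict hG one_le_two hsub)

end Delta1
end
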